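/- arXiv:1801.01735 — 2 statements merged into one kernel-verified Lean document; each statement's English description precedes it below -/
import Mathlib

section
/- Let Γ be a group and ω a normalized 𝕋-valued 3-cocycle on Γ. Then for all s, γ ∈ Γ one has ω(γ, s⁻¹, s) · ω(s⁻¹, sγs⁻¹, s)⁻¹ · ω(s⁻¹, s, γ) = ω(s⁻¹, s, γ) · ω(s⁻¹, sγ, s⁻¹) · ω(sγs⁻¹, s, s⁻¹) · ω(s⁻¹, s, s⁻¹)⁻¹. (The left-hand side is Ψ[s⁻¹,s](γ) for the associated equivariant 2-cocycle Ψ, and the right-hand side is the inverse of the factor relating the twisted involution ⋆ to # on the tube algebra; this identity is the computational core of the theorem that the tube algebra of the twisted category is the 2-cocycle twist of the original one.) -/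
/-!
The cocycle identities at `(γ, s⁻¹, s, s⁻¹)` and `(s⁻¹, sγs⁻¹, s, s⁻¹)` both have
`ω(γs⁻¹, s, s⁻¹)` as their right-hand side, since a factor with `1` as an argument is trivial.
Equating the two left-hand sides gives the claim.
-/

/-- The multiplicative 3-cocycle identity for the trivial action, i.e. the pentagon equation of an
associator. It is stated without inverses; normalization is not part of the definition. -/
def IsMulCocycle₃ {M A : Type*} [Mul M] [Mul A] (ω : M → M → M → A) : Prop :=
  ∀ x y z w : M,
    ω x y z * ω x (y * z) w * ω y z w = ω (x * y) z w * ω x y (z * w)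

namespace IsMulCocycle₃

variable {M A : Type*} [Monoid M] [RightCancelMonoid A] {ω : M → M → M → A}

theorem map_one_right (hω : IsMulCocycle₃ ω) (hmid : ∀ x y, ω x 1 y = 1) (x y : M) :
    ω x y 1 = 1 := by
  have pentagon := hω x y 1 1
  rw [mul_one, mul_one, hmid, hmid, mul_one, one_mul] at pentagon
  exact mul_eq_right.mp pentagon

theorem map_mul_left_of_mul_eq_one (hω : IsMulCocycle₃ ω) (hmid : ∀ x y, ω x 1 y = 1)
    {s t : M} (hst : s * t = 1) (x y : M) :
    ω (x * y) s t = ω x y s * ω x (y * s) t * ω y s t := by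
  rw [hω x y s t, hst, hω.map_one_right hmid, mul_one]

end IsMulCocycle₃

theorem omega_identity_seven_general {M A : Type*} [Monoid M] [CommGroup A]
    {ω : M → M → M → A} (hω : IsMulCocycle₃ ω) (hmid : ∀ x y, ω x 1 y = 1) (s : Mˣ) (γ : M) :
    ω γ ↑s⁻¹ s * (ω ↑s⁻¹ (s * γ * ↑s⁻¹) s)⁻¹ * ω ↑s⁻¹ s γ =
      ω ↑s⁻¹ s γ * ω ↑s⁻¹ (s * γ) ↑s⁻¹ * ω (s * γ * ↑s⁻¹) s ↑s⁻¹ *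
        (ω ↑s⁻¹ s ↑s⁻¹)⁻¹ := by
  have split_at_γ : ω (γ * ↑s⁻¹) s ↑s⁻¹ = ω γ ↑s⁻¹ s * ω ↑s⁻¹ s ↑s⁻¹ := by
    rw [hω.map_mul_left_of_mul_eq_one hmid s.mul_inv, s.inv_mul, hmid, mul_one]
  have split_at_inv : ω (γ * ↑s⁻¹) s ↑s⁻¹ =
      ω ↑s⁻¹ (s * γ * ↑s⁻¹) s * ω ↑s⁻¹ (s * γ) ↑s⁻¹ * ω (s * γ * ↑s⁻¹) s ↑s⁻¹ := by
    have conj := hω.map_mul_left_of_mul_eq_one hmid s.mul_inv ↑s⁻¹ (s * γ * ↑s⁻¹)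
    rwa [mul_assoc (s : M) γ, s.inv_mul_cancel_left, ← mul_assoc (s : M) γ,
      s.inv_mul_cancel_right] at conj
  have quotient_eq : ω γ ↑s⁻¹ s * (ω ↑s⁻¹ (s * γ * ↑s⁻¹) s)⁻¹ =
      ω ↑s⁻¹ (s * γ) ↑s⁻¹ * ω (s * γ * ↑s⁻¹) s ↑s⁻¹ * (ω ↑s⁻¹ s ↑s⁻¹)⁻¹ := by
    rw [← div_eq_mul_inv, ← div_eq_mul_inv, div_eq_div_iff_mul_eq_mul, ← split_at_γ,
      split_at_inv, mul_assoc, mul_comm]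
  rw [quotient_eq, mul_comm]
  simp only [mul_assoc]

/-- For a normalized 𝕋-valued 3-cocycle `ω` on a group `Γ`:
`ω(γ,s⁻¹,s) · ω(s⁻¹,sγs⁻¹,s)⁻¹ · ω(s⁻¹,s,γ)
  = ω(s⁻¹,s,γ) · ω(s⁻¹,sγ,s⁻¹) · ω(sγs⁻¹,s,s⁻¹) · ω(s⁻¹,s,s⁻¹)⁻¹`.
The left-hand side is `Ψ[s⁻¹,s](γ)`, the right-hand side the inverse of the factor relating
the twisted involution `⋆` to `#` on the tube algebra. -/
theorem omega_identity_seven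
    {Γ : Type*} [Group Γ] (ω : Γ → Γ → Γ → Circle)
    (hcoc : ∀ γ₁ γ₂ γ₃ γ₄ : Γ,
      ω γ₁ γ₂ γ₃ * ω γ₁ (γ₂ * γ₃) γ₄ * ω γ₂ γ₃ γ₄ =
        ω (γ₁ * γ₂) γ₃ γ₄ * ω γ₁ γ₂ (γ₃ * γ₄))
    (hnorm : ∀ γ₁ γ₂ γ₃ : Γ, γ₁ = 1 ∨ γ₂ = 1 ∨ γ₃ = 1 → ω γ₁ γ₂ γ₃ = 1) :
    ∀ s γ : Γ,
      ω γ s⁻¹ s * (ω s⁻¹ (s * γ * s⁻¹) s)⁻¹ * ω s⁻¹ s γ =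
        ω s⁻¹ s γ * ω s⁻¹ (s * γ) s⁻¹ * ω (s * γ * s⁻¹) s s⁻¹ *
          (ω s⁻¹ s s⁻¹)⁻¹ :=
  fun s γ ↦ omega_identity_seven_general hcoc
    (fun x y ↦ hnorm x 1 y (.inr (.inl rfl))) (toUnits s) γ
end

section
/- Let n₁, n₂ ≥ 1 be integers and Γ = (ℤ/n₁ℤ) × (ℤ/n₂ℤ). The map φ₁₂(a,b,c) = exp(2π√−1 · c₁(a₁,b₁) · r(c₂)/n₂), where c₁ is the carry function on ℤ/n₁ℤ and r(c₂) is the canonical representative of the second component of c, is a normalized 𝕋-valued 3-cocycle on Γ: for all a,b,c,d ∈ Γ one has φ₁₂(a,b,c)·φ₁₂(a,b+c,d)·φ₁₂(b,c,d) = φ₁₂(a+b,c,d)·φ₁₂(a,b,c+d), and φ₁₂(a,b,c) = 1 whenever one of a, b, c is 0. -/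
/-- The 3-cochain `φ₁₂` on `(ℤ/n₁ℤ) × (ℤ/n₂ℤ)`:
`φ₁₂(a,b,c) = exp(2π√−1 · ⌊(r(a₁)+r(b₁))/n₁⌋ · r(c₂)/n₂)`. -/
noncomputable def phi12 (n₁ n₂ : ℕ) (a b c : ZMod n₁ × ZMod n₂) : Circle :=
  Circle.exp
    (2 * Real.pi * (((a.1.val + b.1.val) / n₁ : ℕ) : ℝ) * (c.2.val : ℝ) / (n₂ : ℝ))

/-! Write `r(x) + r(y) = r(x + y) + n · c(x, y)` on `ℤ/nℤ`: the carry is, up to the factor `n`, the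
coboundary of the section `r : ℤ/nℤ → ℤ`, hence a 2-cocycle. As `x ↦ exp (2πi r(x)/n)` is a
character `χ` of `ℤ/nℤ`, the cochain `φ₁₂(a, b, c) = χ(c₂) ^ c₁(a₁, b₁)` is the cup product of a
2-cocycle with a 1-cocycle. -/

/-- Normalized 2-cocycles on `G` with values in an additively written `A`, for the trivial action.
The identity has no subtraction, so that the `ℕ`-valued carry is covered. -/
structure IsNormalizedCocycle₂ {G A : Type*} [AddZeroClass G] [AddZeroClass A]
    (f : G → G → A) : Prop where
  cocycle (a b c : G) : f a (b + c) + f b c = f (a + b) c + f a b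
  zero_left (b : G) : f 0 b = 0
  zero_right (a : G) : f a 0 = 0

/-- Normalized 3-cocycles on `G` with values in a multiplicatively written `M`, for the trivial
action. The identity has no division, so that `M` need not be a group. -/
structure IsNormalizedMulCocycle₃ {G M : Type*} [AddZeroClass G] [MulOneClass M]
    (φ : G → G → G → M) : Prop where
  cocycle (a b c d : G) : φ a b c * φ a (b + c) d * φ b c d = φ (a + b) c d * φ a b (c + d)
  normalized (a b c : G) (h : a = 0 ∨ b = 0 ∨ c = 0) : φ a b c = 1

/-- The cup product of an `ℕ`-valued 2-cochain `f` with an `M`-valued 1-cochain `χ`, for the pairing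
`ℕ × M → M`, `(k, m) ↦ m ^ k`. -/
def cup {G M : Type*} [Monoid M] (f : G → G → ℕ) (χ : G → M) (a b c : G) : M :=
  χ c ^ f a b

namespace IsNormalizedCocycle₂

theorem comp {G H A : Type*} [AddZeroClass G] [AddZeroClass H] [AddZeroClass A]
    {f : H → H → A} (hf : IsNormalizedCocycle₂ f) (π : G →+ H) :
    IsNormalizedCocycle₂ fun a b => f (π a) (π b) where
  cocycle a b c := by simpa only [map_add] using hf.cocycle (π a) (π b) (π c)
  zero_left b := by simpa only [map_zero] using hf.zero_left (π b)
  zero_right a := by simpa only [map_zero] using hf.zero_right (π a)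

theorem cup_addChar {G M : Type*} [AddMonoid G] [CommMonoid M] {f : G → G → ℕ}
    (hf : IsNormalizedCocycle₂ f) (χ : AddChar G M) : IsNormalizedMulCocycle₃ (cup f χ) where
  cocycle a b c d := calc
    χ c ^ f a b * χ d ^ f a (b + c) * χ d ^ f b c
      = χ c ^ f a b * χ d ^ (f (a + b) c + f a b) := by
        rw [mul_assoc, ← pow_add, hf.cocycle]
    _ = χ d ^ f (a + b) c * (χ c * χ d) ^ f a b := by
        rw [pow_add, mul_pow, mul_left_comm]
    _ = χ d ^ f (a + b) c * χ (c + d) ^ f a b := by rw [AddChar.map_add_eq_mul]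
  normalized := by
    rintro a b c (rfl | rfl | rfl)
    · rw [cup, hf.zero_left, pow_zero]
    · rw [cup, hf.zero_right, pow_zero]
    · rw [cup, AddChar.map_zero_eq_one, one_pow]

end IsNormalizedCocycle₂

/-- The carry function `c(x, y) = ⌊(r(x) + r(y)) / n⌋` on `ℤ/nℤ`, where `r` is `ZMod.val`. -/
def carry {n : ℕ} (x y : ZMod n) : ℕ :=
  (x.val + y.val) / n

theorem val_add_add_mul_carry {n : ℕ} [NeZero n] (x y : ZMod n) :
    (x + y).val + n * carry x y = x.val + y.val := by
  rw [ZMod.val_add, carry, Nat.mod_add_div]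

theorem isNormalizedCocycle₂_carry (n : ℕ) [NeZero n] :
    IsNormalizedCocycle₂ (carry : ZMod n → ZMod n → ℕ) where
  cocycle x y z := by
    -- Both sides, multiplied by `n`, equal `r(x) + r(y) + r(z) - r(x + y + z)`.
    apply Nat.eq_of_mul_eq_mul_left (NeZero.pos n)
    have h_x_yz := val_add_add_mul_carry x (y + z)
    have h_y_z := val_add_add_mul_carry y z
    have h_xy_z := val_add_add_mul_carry (x + y) z
    have h_x_y := val_add_add_mul_carry x y
    rw [← add_assoc x y z] at h_x_yz
    linarith
  zero_left y := by rw [carry, ZMod.val_zero, zero_add, Nat.div_eq_of_lt y.val_lt]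
  zero_right x := by rw [carry, ZMod.val_zero, add_zero, Nat.div_eq_of_lt x.val_lt]

theorem phi12_eq_cup (n₁ n₂ : ℕ) [NeZero n₂] :
    phi12 n₁ n₂ =
      cup (fun a b => carry (AddMonoidHom.fst _ _ a) (AddMonoidHom.fst _ _ b))
        (ZMod.toCircle.compAddMonoidHom (AddMonoidHom.snd (ZMod n₁) (ZMod n₂))) := by
  funext a b c
  simp only [phi12, cup, carry, AddChar.compAddMonoidHom_apply, AddMonoidHom.coe_fst,
    AddMonoidHom.coe_snd, ZMod.toCircle_eq_circleExp, ← Circle.exp_natCast_mul]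
  ring_nf

/-- For `n₁, n₂ ≥ 1`, `φ₁₂` is a normalized 𝕋-valued 3-cocycle on
`(ℤ/n₁ℤ) × (ℤ/n₂ℤ)`. -/
theorem phi12_is_normalized_three_cocycle (n₁ n₂ : ℕ) (hn₁ : 1 ≤ n₁) (hn₂ : 1 ≤ n₂) :
    (∀ a b c d : ZMod n₁ × ZMod n₂,
      phi12 n₁ n₂ a b c * phi12 n₁ n₂ a (b + c) d * phi12 n₁ n₂ b c d =
        phi12 n₁ n₂ (a + b) c d * phi12 n₁ n₂ a b (c + d)) ∧
    (∀ a b c : ZMod n₁ × ZMod n₂, a = 0 ∨ b = 0 ∨ c = 0 → phi12 n₁ n₂ a b c = 1) := by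
  have : NeZero n₁ := ⟨Nat.one_le_iff_ne_zero.mp hn₁⟩
  have : NeZero n₂ := ⟨Nat.one_le_iff_ne_zero.mp hn₂⟩
  have h : IsNormalizedMulCocycle₃ (phi12 n₁ n₂) := by
    rw [phi12_eq_cup]
    exact ((isNormalizedCocycle₂_carry n₁).comp (AddMonoidHom.fst _ _)).cup_addChar _
  exact ⟨h.cocycle, h.normalized⟩
end
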